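/- (Superregular decomposition.) Let H ≤ G = 𝔽₂ⁿ be a subgroup, g ∈ G, ρ ∈ (0,1], d ∈ (0,1], and A ⊆ H+g. Then there exist t ∈ ℕ and triples (A_i, H_i, z_i) for i = 1,…,t such that A₁,…,A_t are pairwise disjoint subsets of A with |A ∖ (A₁ ∪ ⋯ ∪ A_t)| ≤ d·|H|, and for every i: (1) H_i ≤ H is a subgroup with index |H/H_i| ≤ 2^{log(1/d)/log(1+ρ)}; (2) z_i ∈ H is a coset representative of H_i in H; (3) A_i ⊆ H_i + z_i + g and |A_i| ≥ d·|H_i|; (4) the indicator function of A_i restricted to H_i + z_i + g is ρ-superregular on H_i + z_i + g. -/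

import Mathlib

open scoped Classical BigOperators

noncomputable section

/-- The group `G = 𝔽₂ⁿ`. -/
abbrev G (n : ℕ) : Type := Fin n → ZMod 2

/-- The coset `H + g` (note that `-g = g` in `𝔽₂ⁿ`). -/
def coset {n : ℕ} (H : AddSubgroup (G n)) (g : G n) : Set (G n) := {x | x + g ∈ H}

/-- The entropy function `f(x) = x log x` (with `f 0 = 0`). -/
def ent (x : ℝ) : ℝ := x * Real.log x

/-- The density of `A` on the coset `H + g`. -/
def dens {n : ℕ} (A : Set (G n)) (H : AddSubgroup (G n)) (g : G n) : ℝ :=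
  (Nat.card ↥(A ∩ coset H g) : ℝ) / (Nat.card ↥H : ℝ)

/-- Mean entropy `F_A(G, H)` of partitioning `G` into cosets of `H`. -/
def meanEntG {n : ℕ} (A : Set (G n)) (H : AddSubgroup (G n)) : ℝ :=
  (∑ g : G n, ent (dens A H g)) / (Fintype.card (G n) : ℝ)

/-- Mean entropy `F_A(H + g, H')` of partitioning the coset `H + g` into cosets of `H'`. -/
def meanEntCoset {n : ℕ} (A : Set (G n)) (H H' : AddSubgroup (G n)) (g : G n) : ℝ :=
  (∑ g₁ : ↥H, ent (dens A H' (g + ↑g₁))) / (Nat.card ↥H : ℝ)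

/-- The standard bilinear form on `𝔽₂ⁿ`. -/
def dotp {n : ℕ} (x y : G n) : ZMod 2 := ∑ i, x i * y i

/-- The character value `(-1)^{⟨x, y⟩}`. -/
def chi {n : ℕ} (x y : G n) : ℝ := if dotp x y = 0 then 1 else -1

/-- Fourier coefficient `f̂_H^g(η) = E_{x ∈ H} [f(x + g) · (-1)^{⟨x, η⟩}]`. -/
def fCoeff {n : ℕ} (H : AddSubgroup (G n)) (g : G n) (f : G n → ℝ) (η : G n) : ℝ :=
  (∑ x : ↥H, f (↑x + g) * chi ↑x η) / (Nat.card ↥H : ℝ)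

/-- `f` is `ρ`-superregular on `H + g`: every Fourier coefficient at a character that is
nontrivial on `H` is at most `ρ` times the zeroth coefficient in absolute value. -/
def SuperregularOn {n : ℕ} (H : AddSubgroup (G n)) (g : G n) (ρ : ℝ) (f : G n → ℝ) : Prop :=
  ∀ η : G n, (∃ x ∈ H, dotp x η ≠ 0) →
    |fCoeff H g f η| ≤ ρ * fCoeff H g f 0

/-- `H'` `(α, β, k)`-shatters `A` on `H + g`. -/
def Shatters {n : ℕ} (H' H : AddSubgroup (G n)) (A : Set (G n)) (g : G n)
    (α β k : ℝ) : Prop :=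
  (Nat.card ↥H : ℝ) / (Nat.card ↥H' : ℝ) ≤ (2 : ℝ) ^ k ∧
  α ≤ (Nat.card {g' : ↥H //
        (Nat.card ↥(A ∩ coset H' (g + ↑g')) : ℝ) ≤ β * dens A H g * (Nat.card ↥H' : ℝ)} : ℝ) /
      (Nat.card ↥H : ℝ)

/-- Number of triangles `(a, b, c)`, `a + b + c = 0`, with `a ∈ S₁`, `b ∈ S₂`, `c ∈ S₃`. -/
def triBetween {n : ℕ} (S₁ S₂ S₃ : Set (G n)) : ℕ :=
  Nat.card {p : G n × G n × G n // p.1 ∈ S₁ ∧ p.2.1 ∈ S₂ ∧ p.2.2 ∈ S₃ ∧ p.1 + p.2.1 + p.2.2 = 0}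

/-- Number of triangles in `A`. -/
def triCount {n : ℕ} (A : Set (G n)) : ℕ := triBetween A A A

/-- The annihilator of `K`: characters trivial on `K`. -/
def ann {n : ℕ} (K : AddSubgroup (G n)) : AddSubgroup (G n) where
  carrier := {η | ∀ x ∈ K, dotp x η = 0}
  zero_mem' := by intro x _; simp [dotp]
  add_mem' := by
    intro a b ha hb x hx
    have h : dotp x (a + b) = dotp x a + dotp x b := by
      simp [dotp, mul_add, Finset.sum_add_distrib]
    rw [h, ha x hx, hb x hx, add_zero]
  neg_mem' := by
    intro a ha x hx
    have h : dotp x (-a) = -dotp x a := by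
      simp [dotp]
    rw [h, ha x hx, neg_zero]

/-- Average of `f` over the coset `v + H'`. -/
def fbar {n : ℕ} (H' : AddSubgroup (G n)) (f : G n → ℝ) (v : G n) : ℝ :=
  (∑ y : ↥H', f (v + ↑y)) / (Nat.card ↥H' : ℝ)

/-- Tower function: `tower 0 = 1`, `tower (i+1) = 2 ^ tower i`. -/
def tower : ℕ → ℕ
  | 0 => 1
  | k + 1 => 2 ^ tower k

/-- `A` is `ε`-far from triangle-free: at least `ε N` elements must be removed from `A`
to destroy all triangles. -/
def FarFromTriangleFree {n : ℕ} (A : Set (G n)) (ε : ℝ) : Prop :=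
  ∀ B ⊆ A, (∀ x ∈ B, ∀ y ∈ B, ∀ z ∈ B, x + y + z ≠ 0) →
    ε * 2 ^ n ≤ (Nat.card ↥(A \ B) : ℝ)

/-- The set of elements of a triangle. -/
def elems {n : ℕ} (p : G n × G n × G n) : Set (G n) := {p.1, p.2.1, p.2.2}

lemma aux_dotp_add {n : ℕ} (x y η : G n) : dotp (x + y) η = dotp x η + dotp y η := by
  simp [dotp, add_mul, Finset.sum_add_distrib]

lemma aux_sum_sub {n : ℕ} (K : AddSubgroup (G n)) (F : G n → ℝ) :
    ∑ x : ↥K, F ↑x = ∑ x : G n, if x ∈ K then F x else 0 := by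
  rw [← Finset.sum_filter]
  exact (Finset.sum_subtype _ (by simp) F).symm

lemma aux_card_sub {n : ℕ} (K : AddSubgroup (G n)) :
    (Nat.card ↥K : ℝ) = ∑ x : G n, if x ∈ K then (1 : ℝ) else 0 := by
  rw [← aux_sum_sub K (fun _ => 1)]
  simp

lemma aux_add_self {n : ℕ} (x : G n) : x + x = 0 := by
  funext i
  exact CharTwo.add_self_eq_zero (x i)

lemma aux_card_coset {n : ℕ} (K : AddSubgroup (G n)) (B : Set (G n)) (c : G n) :
    (Nat.card ↥(B ∩ coset K c) : ℝ) = ∑ x : G n, if x ∈ K then (B.indicator 1 (x + c) : ℝ) else 0 := by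
  rw [← Equiv.sum_comp (Equiv.addRight c)]
  have : ∀ x : G n, x + c + c = x := fun x => by rw [add_assoc, aux_add_self, add_zero]
  have h2 : ∀ x : G n, (if x + c ∈ K then (B.indicator 1 x : ℝ) else 0)
      = if x ∈ B ∩ coset K c then 1 else 0 := by
    intro x
    by_cases h : x ∈ B <;> by_cases h' : x + c ∈ K <;> simp [coset, h, h']
  simp only [Equiv.coe_addRight, this, h2]
  rw [Finset.sum_boole, Nat.card_eq_fintype_card, Fintype.card_subtype]

/-- kernel of a character within a subgroup -/
def auxKer {n : ℕ} (K : AddSubgroup (G n)) (η : G n) : AddSubgroup (G n) where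
  carrier := {x | x ∈ K ∧ dotp x η = 0}
  zero_mem' := ⟨K.zero_mem, by simp [dotp]⟩
  add_mem' := by
    rintro a b ⟨ha, ha'⟩ ⟨hb, hb'⟩
    exact ⟨K.add_mem ha hb, by rw [aux_dotp_add, ha', hb', add_zero]⟩
  neg_mem' := by
    rintro a ⟨ha, ha'⟩
    refine ⟨K.neg_mem ha, ?_⟩
    have h : dotp (-a) η = -dotp a η := by simp [dotp]
    rw [h, ha', neg_zero]

lemma aux_mem_ker {n : ℕ} (K : AddSubgroup (G n)) (η x : G n) :
    x ∈ auxKer K η ↔ x ∈ K ∧ dotp x η = 0 := Iff.rfl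

lemma aux_split {n : ℕ} (K : AddSubgroup (G n)) (η x₀ : G n) (hx₀ : x₀ ∈ K)
    (hη : dotp x₀ η ≠ 0) (F : G n → ℝ) :
    (∑ x : G n, if x ∈ K then F x else 0) =
      (∑ x : G n, if x ∈ auxKer K η then F x else 0) +
      ∑ x : G n, if x ∈ auxKer K η then F (x + x₀) else 0 := by
  rw [← Equiv.sum_comp (Equiv.addRight x₀)
    (fun x => if x ∈ auxKer K η then F (x + x₀) else 0), ← Finset.sum_add_distrib]
  refine Finset.sum_congr rfl fun x _ => ?_
  have h1 : x + x₀ + x₀ = x := by rw [add_assoc, aux_add_self, add_zero]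
  have h2 : x + x₀ ∈ K ↔ x ∈ K := AddSubgroup.add_mem_cancel_right K hx₀
  have h3 : dotp (x + x₀) η = 0 ↔ dotp x η ≠ 0 := by
    rw [aux_dotp_add]
    generalize dotp x η = a at *
    generalize dotp x₀ η = b at *
    revert a b
    decide
  simp only [Equiv.coe_addRight, h1, aux_mem_ker, h2, h3]
  by_cases h : x ∈ K <;> by_cases h' : dotp x η = 0 <;> simp [h, h']

lemma aux_fCoeff {n : ℕ} (K : AddSubgroup (G n)) (B : Set (G n)) (c η ξ : G n) (x₀ : G n)
    (hx₀ : x₀ ∈ K) (hη : dotp x₀ η ≠ 0) (s : ℝ)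
    (h0 : ∀ x ∈ auxKer K η, chi x ξ = 1) (h1 : ∀ x ∈ auxKer K η, chi (x + x₀) ξ = s) :
    fCoeff K c (Set.indicator (B ∩ coset K c) 1) ξ * (Nat.card ↥K : ℝ) =
      (Nat.card ↥(B ∩ coset (auxKer K η) c) : ℝ) +
        s * (Nat.card ↥(B ∩ coset (auxKer K η) (c + x₀)) : ℝ) := by
  have hK : (Nat.card ↥K : ℝ) ≠ 0 := by
    exact_mod_cast Nat.card_pos.ne'
  have hind : ∀ x ∈ K, (Set.indicator (B ∩ coset K c) 1 (x + c) : ℝ) = B.indicator 1 (x + c) := by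
    intro x hx
    have h1 : x + c + c = x := by rw [add_assoc, aux_add_self, add_zero]
    by_cases h : x + c ∈ B <;> simp [coset, h, h1, hx]
  rw [fCoeff, div_mul_cancel₀ _ hK,
    aux_sum_sub K (fun x => (Set.indicator (B ∩ coset K c) 1 (x + c) : ℝ) * chi x ξ),
    aux_split K η x₀ hx₀ hη, aux_card_coset, aux_card_coset, Finset.mul_sum]
  congr 1
  · refine Finset.sum_congr rfl fun x _ => ?_
    split_ifs with h
    · rw [h0 x h, hind x h.1, mul_one]
    · rfl
  · refine Finset.sum_congr rfl fun x _ => ?_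
    split_ifs with h
    · rw [h1 x h, hind _ (K.add_mem h.1 hx₀), mul_comm, add_assoc, add_comm x₀ c]
    · simp

lemma aux_card_ker {n : ℕ} (K : AddSubgroup (G n)) (η x₀ : G n) (hx₀ : x₀ ∈ K)
    (hη : dotp x₀ η ≠ 0) : (Nat.card ↥K : ℝ) = 2 * (Nat.card ↥(auxKer K η) : ℝ) := by
  rw [aux_card_sub, aux_card_sub, aux_split K η x₀ hx₀ hη (fun _ => 1)]
  ring

lemma aux_extract {n : ℕ} (H : AddSubgroup (G n)) (g : G n) (ρ d : ℝ) (hρ : 0 < ρ)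
    (B : Set (G n)) : ∀ (m : ℕ) (K : AddSubgroup (G n)) (z : G n) (k : ℕ), Nat.card ↥K = m →
      K ≤ H → z ∈ H → (Nat.card ↥H : ℝ) = 2 ^ k * (Nat.card ↥K : ℝ) →
      d * (1 + ρ) ^ k * (Nat.card ↥K : ℝ) ≤ (Nat.card ↥(B ∩ coset K (g + z)) : ℝ) →
      ∃ (K : AddSubgroup (G n)) (z : G n) (k : ℕ),
      K ≤ H ∧ z ∈ H ∧ (Nat.card ↥H : ℝ) = 2 ^ k * (Nat.card ↥K : ℝ) ∧
      d * (1 + ρ) ^ k * (Nat.card ↥K : ℝ) ≤ (Nat.card ↥(B ∩ coset K (g + z)) : ℝ) ∧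
      SuperregularOn K (g + z) ρ (Set.indicator (B ∩ coset K (g + z)) 1) := by
  intro m
  induction m using Nat.strong_induction_on with
  | _ m ih =>
  intro K z k hm hKH hz hcard hdens
  by_cases hs : SuperregularOn K (g + z) ρ (Set.indicator (B ∩ coset K (g + z)) 1)
  · exact ⟨K, z, k, hKH, hz, hcard, hdens, hs⟩
  unfold SuperregularOn at hs
  push Not at hs
  obtain ⟨η, ⟨x₀, hx₀, hη⟩, hlt⟩ := hs
  have hc := aux_card_ker K η x₀ hx₀ hη
  have e1 := aux_fCoeff K B (g + z) η η x₀ hx₀ hη (-1)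
    (fun x hx => by simp [chi, hx.2]) (fun x hx => by simp [chi, aux_dotp_add, hx.2, hη])
  have e0 := aux_fCoeff K B (g + z) η 0 x₀ hx₀ hη 1
    (fun x hx => by simp [chi, dotp]) (fun x hx => by simp [chi, dotp])
  have e2 : (Nat.card ↥(B ∩ coset K (g + z)) : ℝ) =
      (Nat.card ↥(B ∩ coset (auxKer K η) (g + z)) : ℝ) +
        (Nat.card ↥(B ∩ coset (auxKer K η) (g + z + x₀)) : ℝ) := by
    rw [aux_card_coset, aux_split K η x₀ hx₀ hη, aux_card_coset, aux_card_coset]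
    simp only [add_assoc, add_comm x₀, add_left_comm x₀]
  have hKpos : (0 : ℝ) < Nat.card ↥K := by exact_mod_cast Nat.card_pos
  have hlt2 := mul_lt_mul_of_pos_right hlt hKpos
  rw [mul_assoc, e0, ← abs_of_pos hKpos, ← abs_mul, e1] at hlt2
  have hless : Nat.card ↥(auxKer K η) < m := by
    have : Nat.card ↥K = 2 * Nat.card ↥(auxKer K η) := by exact_mod_cast hc
    have : 0 < Nat.card ↥(auxKer K η) := Nat.card_pos
    omega
  have hle : auxKer K η ≤ H := fun x hx => hKH hx.1
  have hcard' : (Nat.card ↥H : ℝ) = 2 ^ (k + 1) * (Nat.card ↥(auxKer K η) : ℝ) := by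
    rw [hcard, hc]; ring
  rw [e2, hc] at hdens
  have hdens' := mul_le_mul_of_nonneg_left hdens (by linarith : 0 ≤ 1 + ρ)
  rcases lt_abs.1 hlt2 with h | h
  · refine ih _ hless (auxKer K η) z (k + 1) rfl hle hz hcard' ?_
    rw [pow_succ]
    linarith
  · refine ih _ hless (auxKer K η) (z + x₀) (k + 1) rfl hle (H.add_mem hz (hKH hx₀)) hcard' ?_
    rw [pow_succ, ← add_assoc]
    linarith

lemma aux_card_le {n : ℕ} (K : AddSubgroup (G n)) (B : Set (G n)) (c : G n) :
    (Nat.card ↥(B ∩ coset K c) : ℝ) ≤ (Nat.card ↥K : ℝ) := by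
  rw [aux_card_coset, aux_card_sub]
  refine Finset.sum_le_sum fun x _ => ?_
  by_cases h : x + c ∈ B <;> by_cases h' : x ∈ K <;> simp [h, h']

lemma aux_index (ρ d C : ℝ) (k : ℕ) (hρ : 0 < ρ) (hd : 0 < d) (hC : 0 < C)
    (h : d * (1 + ρ) ^ k * C ≤ C) :
    (2 : ℝ) ^ k ≤ (2 : ℝ) ^ (Real.log (1 / d) / Real.log (1 + ρ)) := by
  have h1 : (1 + ρ) ^ k ≤ 1 / d := by
    rw [le_div_iff₀ hd]
    have : d * (1 + ρ) ^ k ≤ 1 := le_of_mul_le_mul_right (by rw [one_mul]; exact h) hC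
    linarith
  have h2 := Real.log_le_log (by positivity) h1
  rw [Real.log_pow] at h2
  rw [← Real.rpow_natCast]
  refine Real.rpow_le_rpow_of_exponent_le (by norm_num) ?_
  rwa [le_div_iff₀ (Real.log_pos (by linarith))]

theorem superregular_decomposition {n : ℕ} (H : AddSubgroup (G n)) (g : G n)
    (ρ d : ℝ) (hρ : ρ ∈ Set.Ioc (0 : ℝ) 1) (hd : d ∈ Set.Ioc (0 : ℝ) 1)
    (A : Set (G n)) (hA : A ⊆ coset H g) :
    ∃ (t : ℕ) (As : Fin t → Set (G n)) (Hs : Fin t → AddSubgroup (G n))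
      (zs : Fin t → G n),
      (∀ i, As i ⊆ A) ∧
      (∀ i j, i ≠ j → Disjoint (As i) (As j)) ∧
      (Nat.card ↥(A \ ⋃ i, As i) : ℝ) ≤ d * (Nat.card ↥H : ℝ) ∧
      ∀ i : Fin t,
        Hs i ≤ H ∧
        (Nat.card ↥H : ℝ) / (Nat.card ↥(Hs i) : ℝ)
          ≤ (2 : ℝ) ^ (Real.log (1 / d) / Real.log (1 + ρ)) ∧
        zs i ∈ H ∧
        As i ⊆ coset (Hs i) (g + zs i) ∧
        d * (Nat.card ↥(Hs i) : ℝ) ≤ (Nat.card ↥(As i) : ℝ) ∧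
        SuperregularOn (Hs i) (g + zs i) ρ (Set.indicator (As i) 1) := by
  suffices key : ∀ (m : ℕ) (A : Set (G n)), A ⊆ coset H g → Nat.card ↥A = m →
    ∃ (t : ℕ) (As : Fin t → Set (G n)) (Hs : Fin t → AddSubgroup (G n))
      (zs : Fin t → G n),
      (∀ i, As i ⊆ A) ∧
      (∀ i j, i ≠ j → Disjoint (As i) (As j)) ∧
      (Nat.card ↥(A \ ⋃ i, As i) : ℝ) ≤ d * (Nat.card ↥H : ℝ) ∧
      ∀ i : Fin t,
        Hs i ≤ H ∧
        (Nat.card ↥H : ℝ) / (Nat.card ↥(Hs i) : ℝ)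
          ≤ (2 : ℝ) ^ (Real.log (1 / d) / Real.log (1 + ρ)) ∧
        zs i ∈ H ∧
        As i ⊆ coset (Hs i) (g + zs i) ∧
        d * (Nat.card ↥(Hs i) : ℝ) ≤ (Nat.card ↥(As i) : ℝ) ∧
        SuperregularOn (Hs i) (g + zs i) ρ (Set.indicator (As i) 1) from key _ A hA rfl
  clear hA A
  intro m
  induction m using Nat.strong_induction_on with
  | _ m ih =>
  intro A hA hm
  by_cases hsmall : (Nat.card ↥A : ℝ) ≤ d * (Nat.card ↥H : ℝ)
  · refine ⟨0, Fin.elim0, Fin.elim0, Fin.elim0, fun i => i.elim0, fun i => i.elim0, ?_,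
      fun i => i.elim0⟩
    simpa using hsmall
  push Not at hsmall
  obtain ⟨K, z, k, hK, hz, hcard, hdens, hsup⟩ := aux_extract H g ρ d hρ.1 A _ H 0 0 rfl le_rfl
    H.zero_mem (by simp) (by
      rw [add_zero, Set.inter_eq_left.2 hA]
      linarith)
  have hKpos : (0 : ℝ) < Nat.card ↥K := by exact_mod_cast Nat.card_pos
  set A₀ := A ∩ coset K (g + z) with hA₀
  have hpow : (1 : ℝ) ≤ (1 + ρ) ^ k := one_le_pow₀ (by linarith [hρ.1])
  have hd0 : d * (Nat.card ↥K : ℝ) ≤ (Nat.card ↥A₀ : ℝ) := by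
    refine le_trans ?_ hdens
    have := mul_pos hd.1 hKpos
    nlinarith
  have hA₀pos : 0 < Nat.card ↥A₀ := by
    have : (0 : ℝ) < Nat.card ↥A₀ := lt_of_lt_of_le (mul_pos hd.1 hKpos) hd0
    exact_mod_cast this
  have hlt : Nat.card ↥(A \ A₀) < m := by
    rw [← hm]
    have h1 : (A \ A₀).ncard + A₀.ncard = A.ncard :=
      Set.ncard_sdiff_add_ncard_of_subset Set.inter_subset_left (Set.toFinite _)
    simp only [Nat.card_coe_set_eq] at *
    omega
  obtain ⟨t, As, Hs, zs, h1, h2, h3, h4⟩ := ih _ hlt (A \ A₀)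
    (Set.sdiff_subset.trans hA) rfl
  refine ⟨t + 1, Fin.cons A₀ As, Fin.cons K Hs, Fin.cons z zs, ?_, ?_, ?_, ?_⟩
  · intro i
    refine Fin.cases ?_ (fun i => ?_) i
    · exact Set.inter_subset_left
    · exact (h1 i).trans Set.sdiff_subset
  · have hdis : ∀ i, Disjoint A₀ (As i) := fun i =>
      Set.disjoint_sdiff_right.mono_right (h1 i)
    intro i j
    refine Fin.cases ?_ (fun i => ?_) i <;> refine Fin.cases ?_ (fun j => ?_) j
    · intro h; exact absurd rfl h
    · intro _; simpa using hdis j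
    · intro _; simpa using (hdis i).symm
    · intro h
      simpa using h2 i j (fun e => h (by rw [e]))
  · have : A \ ⋃ i, (Fin.cons A₀ As : Fin (t + 1) → Set (G n)) i = (A \ A₀) \ ⋃ i, As i := by
      ext x
      simp only [Set.mem_sdiff, Set.mem_iUnion, Fin.exists_fin_succ, Fin.cons_zero, Fin.cons_succ]
      tauto
    rw [this]
    exact h3
  · intro i
    refine Fin.cases ?_ (fun i => ?_) i
    · simp only [Fin.cons_zero]
      refine ⟨hK, ?_, hz, Set.inter_subset_right, hd0, hsup⟩
      rw [hcard, mul_div_cancel_right₀ _ hKpos.ne']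
      exact aux_index ρ d _ k hρ.1 hd.1 hKpos (hdens.trans (aux_card_le _ _ _))
    · simpa using h4 i
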